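/- A linear functional φ : ℓ∞ → ℝ is an extreme point of the convex set 𝒞 if and only if φ = φ^𝒰 for some free ultrafilter 𝒰 on ℕ. That is, the set of extreme points of 𝒞 is exactly 𝒞̃. -/

import Mathlib

/-!
Write `M f` for the sequence of Cesàro means of `f`. A sequence `a` agrees with some `M f` away from
`0` exactly when the increments of `n ↦ n * a n` are bounded, and this condition is stable under
pointwise products. So `𝒞` consists of the states (positive unital functionals) of an algebra of
bounded sequences, modulo sequences vanishing near infinity.

If `φ` is an extreme state and `φ k = 0` with `|k| ≤ 1`, then `f ↦ φ (f * (1 ± k))` are two states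
with midpoint `φ`, so `φ (f * k) = 0`; in particular `φ` kills the squares of the elements of its
kernel. Hence each function is within `ε` of its `φ`-value off a `φ`-null set, and any ultrafilter
finer than the filter of complements of `φ`-null sets represents `φ`. Conversely a limit along an
ultrafilter kills the squares of its kernel; so does every state that enters a convex decomposition
of it, which by Cauchy–Schwarz then has the same kernel.
-/

open Filter

noncomputable section

/-- `ℓ∞`, the bounded (continuous, for the discrete topology) functions `ℕ → ℝ`. -/
abbrev linf : Type := BoundedContinuousFunction ℕ ℝ

/-- `C̄(f) = limsup_{n→∞} (1/n) ∑_{i=1}^n f(i)`. -/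
def Cbar (f : linf) : ℝ :=
  limsup (fun n : ℕ => (1 / (n : ℝ)) * ∑ i ∈ Finset.Icc 1 n, f i) atTop

/-- The class `𝒞` of linear functionals `φ` on `ℓ∞` with `φ(f) ≤ C̄(f)` for all `f`. -/
def Ccl : Set (linf →ₗ[ℝ] ℝ) := {φ | ∀ f : linf, φ f ≤ Cbar f}

open scoped Topology

theorem eq_zero_of_add_mem_of_sub_mem_of_mem_extremePoints {V : Type*} [AddCommGroup V]
    [Module ℝ V] {A : Set V} {x v : V} (hx : x ∈ A.extremePoints ℝ) (hadd : x + v ∈ A)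
    (hsub : x - v ∈ A) : v = 0 := by
  have hmid : x ∈ openSegment ℝ (x + v) (x - v) :=
    ⟨1 / 2, 1 / 2, by norm_num, by norm_num, by norm_num, by module⟩
  exact add_eq_left.1 (hx.2 hadd hsub hmid)

section LimsupDominated

variable {α E : Type*} [AddCommGroup E] [Module ℝ E]

/-- The linear functionals on `E` dominated by the upper limit along `l` of the functions that `T`
attaches to the elements of `E`; this is `𝒞` when `T` takes Cesàro means and `l = atTop`. -/
def limsupDominated (l : Filter α) (T : E →ₗ[ℝ] α → ℝ) : Set (E →ₗ[ℝ] ℝ) :=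
  {φ | ∀ f, φ f ≤ limsup (T f) l}

/-- The functions in the range of `T` form, up to eventual equality along `l`, a unital algebra of
bounded functions. The unit and the products are only required to have some preimage in `E`, because
`T` need not be injective and so need not induce a multiplication on `E`. -/
structure IsBoundedAlgebraAlong (l : Filter α) (T : E →ₗ[ℝ] α → ℝ) : Prop where
  isBoundedUnder (f : E) : l.IsBoundedUnder (· ≤ ·) fun n => |T f n|
  exists_one : ∃ e, T e =ᶠ[l] 1
  exists_mul (f g : E) : ∃ h, T h =ᶠ[l] T f * T g

variable {l : Filter α} {T : E →ₗ[ℝ] α → ℝ} {φ : E →ₗ[ℝ] ℝ} {e f g k q : E}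

theorem mem_limsupDominated_iff [l.NeBot]
    (hb : ∀ f, l.IsBoundedUnder (· ≤ ·) fun n => |T f n|) (he : T e =ᶠ[l] 1) :
    φ ∈ limsupDominated l T ↔ (∀ f, 0 ≤ᶠ[l] T f → 0 ≤ φ f) ∧ φ e = 1 := by
  have map_le_of_eventually_le (hφ : φ ∈ limsupDominated l T) {f : E} {c : ℝ}
      (hf : ∀ᶠ n in l, T f n ≤ c) : φ f ≤ c :=
    (hφ f).trans <|
      limsup_le_of_le (isBoundedUnder_le_abs.1 (hb f)).2.isCoboundedUnder_le hf
  refine ⟨fun hφ => ⟨fun f hf => ?_, le_antisymm ?_ ?_⟩, fun ⟨hpos, hone⟩ f => ?_⟩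
  · have : φ (-f) ≤ 0 := map_le_of_eventually_le hφ <| hf.mono fun n hn => by simpa using hn
    simpa using this
  · exact map_le_of_eventually_le hφ he.le
  · have : φ (-e) ≤ -1 := map_le_of_eventually_le hφ <| he.mono fun n hn => by simp [hn]
    simpa using this
  · refine le_of_forall_gt_imp_ge_of_dense fun c hc => ?_
    have hlt : ∀ᶠ n in l, T f n < c :=
      eventually_lt_of_limsup_lt hc (isBoundedUnder_le_abs.1 (hb f)).1
    have : 0 ≤ φ (c • e - f) := hpos _ <| by
      filter_upwards [hlt, he] with n hn hen
      simp [hen, hn.le]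
    simpa [hone] using this

namespace IsBoundedAlgebraAlong

variable [l.NeBot] (hT : IsBoundedAlgebraAlong l T)
include hT

protected theorem map_nonneg (hφ : φ ∈ limsupDominated l T) (hf : 0 ≤ᶠ[l] T f) : 0 ≤ φ f := by
  obtain ⟨e, he⟩ := hT.exists_one
  exact ((mem_limsupDominated_iff hT.isBoundedUnder he).1 hφ).1 f hf

theorem map_eq_one (hφ : φ ∈ limsupDominated l T) (he : T e =ᶠ[l] 1) : φ e = 1 :=
  ((mem_limsupDominated_iff hT.isBoundedUnder he).1 hφ).2

protected theorem map_mono (hφ : φ ∈ limsupDominated l T) (h : T f ≤ᶠ[l] T g) : φ f ≤ φ g := by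
  have : 0 ≤ φ (g - f) := hT.map_nonneg hφ <| h.mono fun n hn => by simpa using hn
  simpa using this

protected theorem map_congr (hφ : φ ∈ limsupDominated l T) (h : T f =ᶠ[l] T g) : φ f = φ g :=
  le_antisymm (hT.map_mono hφ h.le) (hT.map_mono hφ h.symm.le)

theorem sq_map_le_map_sq (hφ : φ ∈ limsupDominated l T) (hq : T q =ᶠ[l] T f ^ 2) :
    φ f ^ 2 ≤ φ q := by
  obtain ⟨e, he⟩ := hT.exists_one
  have variance_nonneg : 0 ≤ φ (q - (2 * φ f) • f + φ f ^ 2 • e) := hT.map_nonneg hφ <| by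
    filter_upwards [hq, he] with n hqn hen
    have : (0 : ℝ) ≤ (T f n - φ f) ^ 2 := sq_nonneg _
    simp [hqn, hen]
    linarith
  simp only [map_add, map_sub, map_smul, smul_eq_mul, hT.map_eq_one hφ he] at variance_nonneg
  linarith

theorem exists_linearMap_map_mul (hφ : φ ∈ limsupDominated l T) (k : E) :
    ∃ χ : E →ₗ[ℝ] ℝ, ∀ f g, T g =ᶠ[l] T f * T k → χ f = φ g := by
  choose m hm using fun f => hT.exists_mul f k
  refine ⟨{ toFun := fun f => φ (m f), map_add' := fun f g => ?_, map_smul' := fun c f => ?_ },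
    fun f g hg => hT.map_congr hφ ((hm f).trans hg.symm)⟩
  · rw [← map_add]
    refine hT.map_congr hφ ?_
    filter_upwards [hm f, hm g, hm (f + g)] with n hf hg hfg
    simp [hf, hg, hfg, add_mul]
  · rw [RingHom.id_apply, ← map_smul]
    refine hT.map_congr hφ ?_
    filter_upwards [hm f, hm (c • f)] with n hf hcf
    simp [hf, hcf, mul_assoc]

theorem add_mem_limsupDominated (hφ : φ ∈ limsupDominated l T) (hk : φ k = 0)
    (hk1 : ∀ᶠ n in l, -1 ≤ T k n) {χ : E →ₗ[ℝ] ℝ}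
    (hχ : ∀ f g, T g =ᶠ[l] T f * T k → χ f = φ g) : φ + χ ∈ limsupDominated l T := by
  obtain ⟨e, he⟩ := hT.exists_one
  refine (mem_limsupDominated_iff hT.isBoundedUnder he).2 ⟨fun f hf => ?_, ?_⟩
  · obtain ⟨g, hg⟩ := hT.exists_mul f k
    rw [LinearMap.add_apply, hχ f g hg, ← map_add]
    refine hT.map_nonneg hφ ?_
    filter_upwards [hf, hg, hk1] with n hfn hgn hkn
    calc (0 : ℝ) ≤ T f n * (1 + T k n) := mul_nonneg hfn (by linarith)
      _ = T (f + g) n := by simp [hgn, mul_add]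
  · have hek : T k =ᶠ[l] T e * T k := he.mono fun n hn => by simp [hn]
    rw [LinearMap.add_apply, hχ e k hek, hk, hT.map_eq_one hφ he, add_zero]

theorem map_mul_eq_zero_of_abs_le_one (hφ : φ ∈ (limsupDominated l T).extremePoints ℝ)
    (hk : φ k = 0) (hk1 : ∀ᶠ n in l, |T k n| ≤ 1) (hg : T g =ᶠ[l] T f * T k) : φ g = 0 := by
  obtain ⟨χ, hχ⟩ := hT.exists_linearMap_map_mul hφ.1 k
  have hadd : φ + χ ∈ limsupDominated l T :=
    hT.add_mem_limsupDominated hφ.1 hk (hk1.mono fun n hn => (abs_le.1 hn).1) hχ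
  have hsub : φ - χ ∈ limsupDominated l T := by
    rw [sub_eq_add_neg]
    refine hT.add_mem_limsupDominated (k := -k) hφ.1 (by simp [hk])
      (hk1.mono fun n hn => by simpa using (abs_le.1 hn).2) fun f g hg => ?_
    rw [LinearMap.neg_apply, hχ f (-g) (hg.mono fun n hn => by simp [hn]), map_neg, neg_neg]
  rw [← hχ f g hg, eq_zero_of_add_mem_of_sub_mem_of_mem_extremePoints hφ hadd hsub,
    LinearMap.zero_apply]

theorem map_mul_eq_zero (hφ : φ ∈ (limsupDominated l T).extremePoints ℝ) (hk : φ k = 0)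
    (hg : T g =ᶠ[l] T f * T k) : φ g = 0 := by
  obtain ⟨C, hC⟩ := (hT.isBoundedUnder k).eventually_le
  set c : ℝ := max C 1
  have hc : 0 < c := lt_max_of_lt_right one_pos
  have : φ (c⁻¹ • g) = 0 := by
    refine hT.map_mul_eq_zero_of_abs_le_one (f := f) (k := c⁻¹ • k) hφ (by simp [hk]) ?_ ?_
    · filter_upwards [hC] with n hn
      rw [map_smul, Pi.smul_apply, smul_eq_mul, abs_mul, abs_of_pos (inv_pos.2 hc),
        inv_mul_le_one₀ hc]
      exact hn.trans (le_max_left C 1)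
    · filter_upwards [hg] with n hn
      simp [hn, mul_left_comm]
  simpa [hc.ne'] using this

theorem mem_extremePoints_of_map_sq_eq_zero (hφ : φ ∈ limsupDominated l T)
    (hsq : ∀ f q, φ f = 0 → T q =ᶠ[l] T f ^ 2 → φ q = 0) :
    φ ∈ (limsupDominated l T).extremePoints ℝ := by
  obtain ⟨e, he⟩ := hT.exists_one
  refine ⟨hφ, fun φ₁ h₁ φ₂ h₂ ⟨a, b, ha, hb, _, hab⟩ => ?_⟩
  have map_eq_zero {f : E} (hf : φ f = 0) : φ₁ f = 0 := by
    obtain ⟨q, hq⟩ := hT.exists_mul f f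
    rw [← sq] at hq
    have hq₁ := hT.sq_map_le_map_sq h₁ hq
    have hq₂ : 0 ≤ φ₂ q := (sq_nonneg _).trans (hT.sq_map_le_map_sq h₂ hq)
    have hsum : a * φ₁ q + b * φ₂ q = 0 := by simpa [← hab] using hsq f q hf hq
    have : φ₁ q ≤ 0 := by nlinarith [mul_nonneg hb.le hq₂]
    exact pow_eq_zero_iff two_ne_zero |>.1 (le_antisymm (hq₁.trans this) (sq_nonneg _))
  ext f
  have : φ₁ (f - φ f • e) = 0 := map_eq_zero (by simp [hT.map_eq_one hφ he])
  simpa [hT.map_eq_one h₁ he, sub_eq_zero] using this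

end IsBoundedAlgebraAlong

/-- The filter of complements of `φ`-null sets, where a set is `φ`-null if, along `l`, its indicator
function is dominated by some `T q` with `φ q = 0`. -/
def conullFilter (l : Filter α) (T : E →ₗ[ℝ] α → ℝ) (φ : E →ₗ[ℝ] ℝ) : Filter α where
  sets := {s | ∃ q, φ q = 0 ∧ ∀ᶠ n in l, 0 ≤ T q n ∧ (n ∉ s → 1 ≤ T q n)}
  univ_sets := ⟨0, by simp⟩
  sets_of_superset := fun ⟨q, hφq, hq⟩ hst =>
    ⟨q, hφq, hq.mono fun _ hn => ⟨hn.1, fun hnt => hn.2 fun hns => hnt (hst hns)⟩⟩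
  inter_sets := by
    rintro s t ⟨p, hφp, hp⟩ ⟨q, hφq, hq⟩
    refine ⟨p + q, by simp [hφp, hφq], ?_⟩
    filter_upwards [hp, hq] with n hpn hqn
    rw [map_add, Pi.add_apply]
    refine ⟨add_nonneg hpn.1 hqn.1, fun hn => ?_⟩
    rcases not_and_or.1 hn with hns | hnt
    · linarith [hpn.2 hns]
    · linarith [hqn.2 hnt]

theorem mem_conullFilter {s : Set α} :
    s ∈ conullFilter l T φ ↔ ∃ q, φ q = 0 ∧ ∀ᶠ n in l, 0 ≤ T q n ∧ (n ∉ s → 1 ≤ T q n) :=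
  Iff.rfl

theorem conullFilter_le : conullFilter l T φ ≤ l := fun _ hs =>
  mem_conullFilter.2 ⟨0, map_zero φ, mem_of_superset hs fun _ hn => by simp [hn]⟩

namespace IsBoundedAlgebraAlong

variable [l.NeBot] (hT : IsBoundedAlgebraAlong l T)
include hT

theorem conullFilter_neBot (hφ : φ ∈ limsupDominated l T) : (conullFilter l T φ).NeBot := by
  refine neBot_iff.2 fun hbot => ?_
  obtain ⟨q, hφq, hq⟩ := mem_conullFilter.1 (empty_mem_iff_bot.2 hbot)
  obtain ⟨e, he⟩ := hT.exists_one
  have : φ e ≤ φ q := hT.map_mono hφ <| by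
    filter_upwards [he, hq] with n hen hqn
    simpa [hen] using hqn.2
  linarith [hT.map_eq_one hφ he]

theorem tendsto_conullFilter (hφ : φ ∈ (limsupDominated l T).extremePoints ℝ) (f : E) :
    Tendsto (T f) (conullFilter l T φ) (𝓝 (φ f)) := by
  obtain ⟨e, he⟩ := hT.exists_one
  refine Metric.tendsto_nhds.2 fun ε hε => ?_
  obtain ⟨q, hq⟩ := hT.exists_mul (f - φ f • e) (f - φ f • e)
  have hφq : φ q = 0 := hT.map_mul_eq_zero hφ (by simp [hT.map_eq_one hφ.1 he]) hq
  refine mem_conullFilter.2 ⟨(ε ^ 2)⁻¹ • q, by simp [hφq], ?_⟩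
  filter_upwards [hq, he] with n hqn hen
  -- Chebyshev's inequality: `(T f - φ f) ^ 2 / ε ^ 2` dominates the indicator of
  -- `{ε ≤ |T f - φ f|}`.
  have hqn : T ((ε ^ 2)⁻¹ • q) n = (ε ^ 2)⁻¹ * (T f n - φ f) ^ 2 := by simp [hqn, hen, sq]
  rw [hqn]
  refine ⟨by positivity, fun hn => ?_⟩
  rw [le_inv_mul_iff₀ (by positivity), mul_one]
  exact sq_le_sq₀ hε.le (abs_nonneg _) |>.2 (not_lt.1 hn) |>.trans_eq (sq_abs _)

omit [l.NeBot] in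
theorem mem_extremePoints_of_tendsto {F : Filter α} [F.NeBot] (hF : F ≤ l)
    (h : ∀ f, Tendsto (T f) F (𝓝 (φ f))) : φ ∈ (limsupDominated l T).extremePoints ℝ := by
  have : l.NeBot := neBot_of_le hF
  have mem_limsupDominated : φ ∈ limsupDominated l T := by
    obtain ⟨e, he⟩ := hT.exists_one
    refine (mem_limsupDominated_iff hT.isBoundedUnder he).2
      ⟨fun f hf => ge_of_tendsto (h f) (hF hf), tendsto_nhds_unique (h e) ?_⟩
    exact tendsto_const_nhds.congr' (hF he.symm)
  refine hT.mem_extremePoints_of_map_sq_eq_zero mem_limsupDominated fun f q hf hq => ?_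
  have hsq : Tendsto (T f ^ 2) F (𝓝 (φ f ^ 2)) := (h f).pow 2
  rw [tendsto_nhds_unique (h q) (hsq.congr' (hF hq.symm)), hf, sq, zero_mul]

omit [l.NeBot] in
theorem tendsto_limUnder_ultrafilter {𝒰 : Ultrafilter α} (h𝒰 : (𝒰 : Filter α) ≤ l) (f : E) :
    Tendsto (T f) 𝒰 (𝓝 (limUnder 𝒰 (T f))) := by
  obtain ⟨C, hC⟩ := (hT.isBoundedUnder f).eventually_le
  have hmem : Set.Icc (-C) C ∈ 𝒰.map (T f) := h𝒰 <| hC.mono fun n hn => abs_le.1 hn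
  obtain ⟨x, -, hx⟩ := isCompact_Icc.ultrafilter_le_nhds _ (le_principal_iff.2 hmem)
  exact tendsto_nhds_limUnder ⟨x, hx⟩

end IsBoundedAlgebraAlong

theorem stmt13_general [l.NeBot] (hT : IsBoundedAlgebraAlong l T) :
    φ ∈ (limsupDominated l T).extremePoints ℝ ↔
      ∃ 𝒰 : Ultrafilter α, (𝒰 : Filter α) ≤ l ∧
        ∀ f, φ f = limUnder (𝒰 : Filter α) (T f) := by
  constructor
  · intro hφ
    have := hT.conullFilter_neBot hφ.1
    have hle := Ultrafilter.of_le (conullFilter l T φ)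
    exact ⟨_, hle.trans conullFilter_le,
      fun f => ((hT.tendsto_conullFilter hφ f).mono_left hle).limUnder_eq.symm⟩
  · rintro ⟨𝒰, h𝒰, hlim⟩
    refine hT.mem_extremePoints_of_tendsto h𝒰 fun f => ?_
    rw [hlim f]
    exact hT.tendsto_limUnder_ultrafilter h𝒰 f

end LimsupDominated

section Cesaro

/-- The sequence of Cesàro means of a bounded function; its value at `0` is the junk value `0`. -/
def cesaroMean : linf →ₗ[ℝ] ℕ → ℝ where
  toFun f n := (1 / (n : ℝ)) * ∑ i ∈ Finset.Icc 1 n, f i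
  map_add' f g := by
    ext n
    simp [Finset.sum_add_distrib, mul_add]
  map_smul' c f := by
    ext n
    simp [← Finset.mul_sum, mul_left_comm]

theorem natCast_mul_cesaroMean (f : linf) (n : ℕ) :
    n * cesaroMean f n = ∑ i ∈ Finset.Icc 1 n, f i := by
  rcases eq_or_ne n 0 with rfl | hn
  · simp
  · simp [cesaroMean, hn]

theorem succ_mul_cesaroMean_sub (f : linf) (n : ℕ) :
    (n + 1 : ℝ) * cesaroMean f (n + 1) - n * cesaroMean f n = f (n + 1) := by
  have h := natCast_mul_cesaroMean f (n + 1)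
  rw [Finset.sum_Icc_succ_top (Nat.le_add_left 1 n), ← natCast_mul_cesaroMean f n] at h
  push_cast at h
  linarith

theorem abs_cesaroMean_le (f : linf) (n : ℕ) : |cesaroMean f n| ≤ ‖f‖ := by
  rcases Nat.eq_zero_or_pos n with rfl | hn
  · simp [cesaroMean]
  · have hn : (0 : ℝ) < n := Nat.cast_pos.2 hn
    refine le_of_mul_le_mul_left ?_ hn
    calc n * |cesaroMean f n| = |∑ i ∈ Finset.Icc 1 n, f i| := by
          rw [← natCast_mul_cesaroMean, abs_mul, abs_of_pos hn]
      _ ≤ ∑ i ∈ Finset.Icc 1 n, |f i| := Finset.abs_sum_le_sum_abs _ _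
      _ ≤ ∑ _i ∈ Finset.Icc 1 n, ‖f‖ := Finset.sum_le_sum fun i _ => f.norm_coe_le_norm i
      _ = n * ‖f‖ := by simp

theorem exists_cesaroMean_eventuallyEq {a : ℕ → ℝ} {C : ℝ}
    (h : ∀ n : ℕ, |(n + 1 : ℝ) * a (n + 1) - n * a n| ≤ C) :
    ∃ f, cesaroMean f =ᶠ[atTop] a := by
  have increments_bounded (i : ℕ) : ‖(i * a i - (i - 1 : ℕ) * a (i - 1) : ℝ)‖ ≤ C := by
    cases i with
    | zero => simpa using (abs_nonneg _).trans (h 0)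
    | succ i => simpa using h i
  let f : linf := .ofNormedAddCommGroupDiscrete _ C increments_bounded
  have sum_telescopes (n : ℕ) : n * cesaroMean f n = n * a n := by
    induction n with
    | zero => simp
    | succ n ih =>
      have hf : f (n + 1) = (n + 1 : ℝ) * a (n + 1) - n * a n := by simp [f]
      rw [← succ_mul_cesaroMean_sub, ih] at hf
      push_cast
      linarith
  refine ⟨f, ?_⟩
  filter_upwards [eventually_ne_atTop 0] with n hn
  exact mul_left_cancel₀ (Nat.cast_ne_zero.2 hn) (sum_telescopes n)

theorem isBoundedAlgebraAlong_cesaroMean : IsBoundedAlgebraAlong atTop cesaroMean where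
  isBoundedUnder f := isBoundedUnder_of ⟨‖f‖, abs_cesaroMean_le f⟩
  exists_one := exists_cesaroMean_eventuallyEq (C := 1) fun n => by simp
  exists_mul f g := by
    refine exists_cesaroMean_eventuallyEq (C := 3 * (‖f‖ * ‖g‖)) fun n => ?_
    set a := cesaroMean f
    set b := cesaroMean g
    have discrete_leibniz : (n + 1 : ℝ) * (a * b) (n + 1) - n * (a * b) n =
        a (n + 1) * g (n + 1) + f (n + 1) * b n - a (n + 1) * b n := by
      rw [← succ_mul_cesaroMean_sub f, ← succ_mul_cesaroMean_sub g, Pi.mul_apply, Pi.mul_apply]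
      ring
    have abs_mul_le {x y : ℝ} (hx : |x| ≤ ‖f‖) (hy : |y| ≤ ‖g‖) : |x * y| ≤ ‖f‖ * ‖g‖ := by
      rw [abs_mul]
      gcongr
    have h₁ := abs_mul_le (abs_cesaroMean_le f (n + 1)) (g.norm_coe_le_norm (n + 1))
    have h₂ := abs_mul_le (f.norm_coe_le_norm (n + 1)) (abs_cesaroMean_le g n)
    have h₃ := abs_mul_le (abs_cesaroMean_le f (n + 1)) (abs_cesaroMean_le g n)
    rw [discrete_leibniz]
    calc |a (n + 1) * g (n + 1) + f (n + 1) * b n - a (n + 1) * b n|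
        ≤ |a (n + 1) * g (n + 1)| + |f (n + 1) * b n| + |a (n + 1) * b n| :=
          (abs_sub _ _).trans (add_le_add_left (abs_add_le _ _) _)
      _ ≤ 3 * (‖f‖ * ‖g‖) := by linarith

theorem Ccl_eq_limsupDominated : Ccl = limsupDominated atTop cesaroMean :=
  rfl

end Cesaro

/-- A linear functional `φ` on `ℓ∞` is an extreme point of `𝒞` iff
`φ = φ^𝒰` for some free ultrafilter `𝒰` on `ℕ`; that is, `ex(𝒞) = 𝒞̃`. -/
theorem stmt13 (φ : linf →ₗ[ℝ] ℝ) :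
    φ ∈ Set.extremePoints ℝ Ccl ↔
      ∃ 𝒰 : Ultrafilter ℕ, (𝒰 : Filter ℕ) ≤ Filter.cofinite ∧ ∀ f : linf,
        φ f = limUnder (𝒰 : Filter ℕ)
          (fun n : ℕ => (1 / (n : ℝ)) * ∑ i ∈ Finset.Icc 1 n, f i) := by
  rw [Nat.cofinite_eq_atTop, Ccl_eq_limsupDominated]
  exact stmt13_general isBoundedAlgebraAlong_cesaroMean
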